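/- For every 1 ≤ i ≤ d, the adjacency matrices of the wreath product satisfy (A_i)² = k_i (A_0 + A_1 + ⋯ + A_{i−1}) + k_i·((n_i − 2)/(n_i − 1))·A_i; equivalently, (A_i)² = k_i (A_0 + A_1 + ⋯ + A_{i−1}) + (k_i − (k_0 + k_1 + ⋯ + k_{i−1})) A_i. -/

import Mathlib

open Finset Matrix

/-- Vertex set of the wreath product `K_{n 0} ≀ K_{n 1} ≀ ⋯ ≀ K_{n (d-1)}`
(paper indices `n_1, …, n_d` correspond to `n 0, …, n (d-1)`). -/
abbrev Vx (d : ℕ) (n : ℕ → ℕ) : Type := (i : Fin d) → Fin (n i)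

/-- `delta x y = 0` if `x = y`; otherwise `delta x y` is the largest (1-based)
index at which `x` and `y` differ. -/
def delta {d : ℕ} {n : ℕ → ℕ} (x y : Vx d n) : ℕ :=
  (Finset.univ.filter fun i => x i ≠ y i).sup fun i => (i : ℕ) + 1

/-- The `i`-th adjacency matrix of the wreath product: `(A i) x y = 1` iff `delta x y = i`. -/
noncomputable def A (d : ℕ) (n : ℕ → ℕ) (i : ℕ) : Matrix (Vx d n) (Vx d n) ℂ :=
  Matrix.of fun x y => if delta x y = i then 1 else 0

/-- The valencies: `k 0 = 1` and, for `1 ≤ i`, `k i = n_1 ⋯ n_{i-1} (n_i - 1)`,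
i.e. `k i = n 0 ⋯ n (i-2) * (n (i-1) - 1)`. -/
def k (n : ℕ → ℕ) (i : ℕ) : ℕ :=
  if i = 0 then 1 else (∏ j ∈ Finset.range (i - 1), n j) * (n (i - 1) - 1)

/-- The dual idempotent `E_i*` with respect to the base point `x₀`: the diagonal
0-1 matrix with `(E_i*)_{yy} = 1` iff `delta x₀ y = i`. -/
noncomputable def Es {d : ℕ} {n : ℕ → ℕ} (x₀ : Vx d n) (i : ℕ) :
    Matrix (Vx d n) (Vx d n) ℂ :=
  Matrix.of fun y z => if y = z ∧ delta x₀ y = i then 1 else 0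

/-- The all-ones matrix `J`. -/
noncomputable def Jm (d : ℕ) (n : ℕ → ℕ) : Matrix (Vx d n) (Vx d n) ℂ :=
  Matrix.of fun _ _ => 1

/-- The matrices `G i j`. -/
noncomputable def G {d : ℕ} {n : ℕ → ℕ} (x₀ : Vx d n) (i j : ℕ) :
    Matrix (Vx d n) (Vx d n) ℂ :=
  if i < j then ((k n j : ℂ))⁻¹ • (Es x₀ i * A d n j * Es x₀ j)
  else if j < i then ((k n j : ℂ))⁻¹ • (Es x₀ i * A d n i * Es x₀ j)
  else ((k n i : ℂ))⁻¹ • (Es x₀ i * Jm d n * Es x₀ i)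

/-- The span `U` of the matrices `G i j`, `i, j ∈ [d]`. -/
noncomputable def Uspan {d : ℕ} {n : ℕ → ℕ} (x₀ : Vx d n) :
    Submodule ℂ (Matrix (Vx d n) (Vx d n) ℂ) :=
  Submodule.span ℂ (Set.range fun p : Fin (d + 1) × Fin (d + 1) => G x₀ p.1 p.2)

/-- The Terwilliger algebra of the wreath product with respect to `x₀`. -/
noncomputable def Ter {d : ℕ} {n : ℕ → ℕ} (x₀ : Vx d n) :
    Subalgebra ℂ (Matrix (Vx d n) (Vx d n) ℂ) :=
  Algebra.adjoin ℂ
    ((Set.range fun i : Fin (d + 1) => A d n i) ∪ (Set.range fun i : Fin (d + 1) => Es x₀ i))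

/-- The matrices `F i h`, for `1 ≤ i ≤ d` and `0 ≤ h ≤ i - 1`. -/
noncomputable def F {d : ℕ} {n : ℕ → ℕ} (x₀ : Vx d n) (i h : ℕ) :
    Matrix (Vx d n) (Vx d n) ℂ :=
  if h < i - 1 then
    (∑ j ∈ Finset.range (h + 1), (k n j : ℂ))⁻¹ •
        (∑ j ∈ Finset.range (h + 1), Es x₀ i * A d n j * Es x₀ i)
      - (∑ j ∈ Finset.range (h + 2), (k n j : ℂ))⁻¹ •
          (∑ j ∈ Finset.range (h + 2), Es x₀ i * A d n j * Es x₀ i)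
  else
    (∑ j ∈ Finset.range i, (k n j : ℂ))⁻¹ •
        (∑ j ∈ Finset.range i, Es x₀ i * A d n j * Es x₀ i)
      - G x₀ i i

/-!
The function `delta` is an ultrametric, so `delta x y ≤ l` is an equivalence relation, and its
classes all have `N l = n 0 ⋯ n (l-1)` elements. Its 0-1 matrix `B l` equals `A 0 + ⋯ + A l`, and
since these relations are nested, `B l * B m = B m * B l = N l • B m` for `l ≤ m`. Squaring
`A (m+1) = B (m+1) - B m` gives the theorem, because `k 0 + ⋯ + k m = N m` and
`k (m+1) = N m * (n m - 1)`.
-/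

section Ultrametric

variable {d : ℕ} {n : ℕ → ℕ}

theorem delta_comm (x y : Vx d n) : delta x y = delta y x := by
  simp only [delta, ne_comm]

theorem delta_le_iff {x y : Vx d n} {l : ℕ} :
    delta x y ≤ l ↔ ∀ i : Fin d, l ≤ i → x i = y i := by
  simp only [delta, Finset.sup_le_iff, mem_filter, mem_univ, true_and, Nat.succ_le_iff]
  exact forall_congr' fun i => by rw [ne_eq, not_imp_comm, not_lt]

theorem delta_le_max (x y z : Vx d n) : delta x z ≤ max (delta x y) (delta y z) :=
  delta_le_iff.2 fun i hi =>
    (delta_le_iff.1 le_rfl i (le_of_max_le_left hi)).trans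
      (delta_le_iff.1 le_rfl i (le_of_max_le_right hi))

theorem delta_le_congr_right {x y z : Vx d n} {m : ℕ} (hyz : delta y z ≤ m) :
    delta x y ≤ m ↔ delta x z ≤ m :=
  ⟨fun hxy => (delta_le_max x y z).trans (max_le hxy hyz),
    fun hxz => (delta_le_max x z y).trans (max_le hxz (delta_comm y z ▸ hyz))⟩

theorem filter_delta_le_eq_piFinset (y : Vx d n) (l : ℕ) :
    (univ.filter fun z : Vx d n => delta z y ≤ l)
      = Fintype.piFinset fun i : Fin d => if (i : ℕ) < l then univ else {y i} := by
  ext z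
  simp only [mem_filter, mem_univ, true_and, Fintype.mem_piFinset, delta_le_iff]
  refine forall_congr' fun i => ?_
  split_ifs with hi
  · simp [hi]
  · simp [not_lt.mp hi]

theorem card_filter_delta_le (y : Vx d n) {l : ℕ} (hl : l ≤ d) :
    (univ.filter fun z : Vx d n => delta z y ≤ l).card = ∏ j ∈ range l, n j := by
  calc (univ.filter fun z : Vx d n => delta z y ≤ l).card
      = ∏ i : Fin d, if (i : ℕ) < l then n i else 1 := by
        simp only [filter_delta_le_eq_piFinset, Fintype.card_piFinset, apply_ite Finset.card,
          card_univ, Fintype.card_fin, card_singleton]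
    _ = ∏ j ∈ range d, if j < l then n j else 1 :=
        Fin.prod_univ_eq_prod_range (fun j => if j < l then n j else 1) d
    _ = ∏ j ∈ range l, n j := by
        rw [← prod_filter]
        congr 1
        ext j
        simp only [mem_filter, mem_range]
        omega

end Ultrametric

section BallMatrix

/-- The 0-1 matrix of the equivalence relation `delta x y ≤ l`, i.e. of lying in a common closed
ball of radius `l`. The adjacency matrices are the successive differences of these matrices, whose
products are easier to compute. -/
noncomputable def ballMatrix (d : ℕ) (n : ℕ → ℕ) (l : ℕ) : Matrix (Vx d n) (Vx d n) ℂ :=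
  Matrix.of fun x y => if delta x y ≤ l then 1 else 0

variable {d : ℕ} {n : ℕ → ℕ}

theorem sum_range_succ_A (m : ℕ) : ∑ j ∈ range (m + 1), A d n j = ballMatrix d n m := by
  ext x y
  simp [Matrix.sum_apply, A, ballMatrix]

theorem A_succ (m : ℕ) : A d n (m + 1) = ballMatrix d n (m + 1) - ballMatrix d n m := by
  rw [← sum_range_succ_A, ← sum_range_succ_A, sum_range_succ _ (m + 1), add_sub_cancel_left]

theorem transpose_ballMatrix (l : ℕ) : (ballMatrix d n l)ᵀ = ballMatrix d n l := by
  ext x y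
  simp only [transpose_apply, ballMatrix, of_apply, delta_comm]

theorem ballMatrix_mul_of_ge {l m : ℕ} (hlm : l ≤ m) (hl : l ≤ d) :
    ballMatrix d n m * ballMatrix d n l = (∏ j ∈ range l, (n j : ℂ)) • ballMatrix d n m := by
  ext x y
  have summand_eq (z : Vx d n) : ballMatrix d n m x z * ballMatrix d n l z y
      = (if delta z y ≤ l then 1 else 0) * ballMatrix d n m x y := by
    by_cases hz : delta z y ≤ l
    · simp [ballMatrix, hz, delta_le_congr_right (x := x) (hz.trans hlm)]
    · simp [ballMatrix, hz]
  simp only [mul_apply, summand_eq]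
  rw [← sum_mul, sum_boole, card_filter_delta_le y hl, Nat.cast_prod, Matrix.smul_apply,
    smul_eq_mul]

theorem ballMatrix_mul_of_le {l m : ℕ} (hlm : l ≤ m) (hl : l ≤ d) :
    ballMatrix d n l * ballMatrix d n m = (∏ j ∈ range l, (n j : ℂ)) • ballMatrix d n m := by
  simpa only [transpose_mul, transpose_smul, transpose_ballMatrix]
    using congrArg transpose (ballMatrix_mul_of_ge (n := n) hlm hl)

theorem A_succ_mul_self {m : ℕ} (hm : m + 1 ≤ d) :
    A d n (m + 1) * A d n (m + 1)
      = ((∏ j ∈ range m, (n j : ℂ)) * (n m - 1)) • ∑ j ∈ range (m + 1), A d n j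
        + ((∏ j ∈ range m, (n j : ℂ)) * (n m - 2)) • A d n (m + 1) := by
  have hmd : m ≤ d := m.le_succ.trans hm
  rw [sum_range_succ_A, A_succ, sub_mul, mul_sub, mul_sub, ballMatrix_mul_of_ge le_rfl hm,
    ballMatrix_mul_of_ge m.le_succ hmd, ballMatrix_mul_of_le m.le_succ hmd,
    ballMatrix_mul_of_ge le_rfl hmd, prod_range_succ]
  module

end BallMatrix

section Valency

theorem k_succ (n : ℕ → ℕ) (m : ℕ) : k n (m + 1) = (∏ j ∈ range m, n j) * (n m - 1) := by
  simp [k]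

variable {n : ℕ → ℕ} {m : ℕ}

theorem cast_k_succ (hm : 1 ≤ n m) :
    (k n (m + 1) : ℂ) = (∏ j ∈ range m, (n j : ℂ)) * (n m - 1) := by
  rw [k_succ, Nat.cast_mul, Nat.cast_prod, Nat.cast_sub hm, Nat.cast_one]

theorem sum_range_succ_k (hn : ∀ j < m, 1 ≤ n j) :
    ∑ j ∈ range (m + 1), k n j = ∏ j ∈ range m, n j := by
  induction m with
  | zero => simp [k]
  | succ m ih =>
    rw [sum_range_succ, ih fun j hj => hn j (hj.trans m.lt_succ_self), k_succ, prod_range_succ,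
      ← mul_one_add, Nat.add_sub_cancel' (hn m m.lt_succ_self)]

end Valency

/-- `(A i)² = k i (A 0 + ⋯ + A (i-1)) + k i ((n_i - 2)/(n_i - 1)) A i
= k i (A 0 + ⋯ + A (i-1)) + (k i - (k 0 + ⋯ + k (i-1))) A i` for `1 ≤ i ≤ d`.
(Here paper's `n_i` is `n (i-1)`.) -/
theorem stmt2 (d : ℕ) (hd : 1 ≤ d) (n : ℕ → ℕ) (hn : ∀ i < d, 2 ≤ n i)
    (i : ℕ) (h1 : 1 ≤ i) (hi : i ≤ d) :
    A d n i * A d n i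
        = (k n i : ℂ) • (∑ j ∈ Finset.range i, A d n j)
          + ((k n i : ℂ) * (((n (i - 1) : ℂ) - 2) / ((n (i - 1) : ℂ) - 1))) • A d n i ∧
    A d n i * A d n i
        = (k n i : ℂ) • (∑ j ∈ Finset.range i, A d n j)
          + ((k n i : ℂ) - ∑ j ∈ Finset.range i, (k n j : ℂ)) • A d n i := by
  obtain ⟨m, rfl⟩ := Nat.exists_eq_add_of_le' h1
  have one_le_n (j : ℕ) (hj : j ≤ m) : 1 ≤ n j :=
    one_le_two.trans (hn j ((Nat.lt_succ_of_le hj).trans_le hi))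
  have hk := cast_k_succ (one_le_n m le_rfl)
  have hsum : ∑ j ∈ range (m + 1), (k n j : ℂ) = ∏ j ∈ range m, (n j : ℂ) := by
    exact_mod_cast sum_range_succ_k fun j hj => one_le_n j hj.le
  have hn_sub_one : (n m : ℂ) - 1 ≠ 0 :=
    sub_ne_zero.2 (Nat.cast_ne_one.2 (Nat.ne_of_gt (hn m hi)))
  rw [A_succ_mul_self hi, hsum, hk, Nat.add_sub_cancel]
  constructor
  · rw [mul_assoc _ _ (_ / _), mul_div_cancel₀ _ hn_sub_one]
  · congr 2
    ring
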